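/- Let n ≥ 3 and p ∈ (n, n + 1/(n−2)). For r ∈ (0,1) set g(r) = (1 + (p−n)∫_r^1 dt/(t^{p−n+1}(ln(e/t))^{(p−n+1)/(n−1)}))^{−1/(p−n)}. Then g(r)/r → ∞ as r → 0+. Consequently, the homeomorphism f(x) = (x/|x|)·g(|x|), f(0)=0, of the unit ball satisfies limsup_{x→0} |f(x)−f(0)|/|x| = ∞, i.e., f is not Lipschitz (indeed not finitely Lipschitz) at the origin. -/

import Mathlib

open MeasureTheory Metric Set Filter
open scoped ENNReal NNReal Topology RealInnerProductSpace Classical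

noncomputable section

abbrev Eucl (n : ℕ) : Type := EuclideanSpace ℝ (Fin n)

/-- A `k`-dimensional surface in `ℝⁿ`: a continuous map defined on an open subset of the
one-point compactification of `ℝᵏ`. -/
structure Surface (n k : ℕ) where
  dom : Set (OnePoint (Eucl k))
  isOpen_dom : IsOpen dom
  toFun : OnePoint (Eucl k) → Eucl n
  continuousOn : ContinuousOn toFun dom

namespace Surface

variable {n k : ℕ}

/-- The multiplicity function `N(S,y)` of a surface. -/
def mult (S : Surface n k) (y : Eucl n) : ℝ≥0∞ :=
  ((S.dom ∩ S.toFun ⁻¹' {y}).encard : ℕ∞)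

/-- The integral `∫_S ρ dA = ∫ ρ(y) N(S,y) dH^k(y)` of `ρ` over the surface `S`. -/
def sint (S : Surface n k) (ρ : Eucl n → ℝ≥0∞) : ℝ≥0∞ :=
  ∫⁻ y, ρ y * S.mult y ∂(μH[(k : ℝ)] : Measure (Eucl n))

end Surface

/-- Admissible functions for a family of `k`-surfaces. -/
def surfAdm {n : ℕ} (k : ℕ) (Γ : Set (Surface n k)) : Set (Eucl n → ℝ≥0∞) :=
  {ρ | Measurable ρ ∧ ∀ S ∈ Γ, 1 ≤ S.sint fun y => ρ y ^ k}

/-- The `p`-modulus of a family of `k`-surfaces. -/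
def surfModulus {n : ℕ} (p : ℝ) (k : ℕ) (Γ : Set (Surface n k)) : ℝ≥0∞ :=
  ⨅ ρ ∈ surfAdm k Γ, ∫⁻ x, ρ x ^ p

/-- Extensively `p`-admissible functions: admissibility may fail on a subfamily of
`p`-modulus zero. -/
def extAdm {n : ℕ} (p : ℝ) (k : ℕ) (Γ : Set (Surface n k)) : Set (Eucl n → ℝ≥0∞) :=
  {ρ | Measurable ρ ∧ surfModulus p k {S ∈ Γ | ¬ 1 ≤ S.sint fun y => ρ y ^ k} = 0}

/-- The family of the (injectively parametrized, nonempty) surfaces `S(x₀,r) ∩ D`,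
`r ∈ I`. -/
def sphereFam {n : ℕ} (D : Set (Eucl n)) (x₀ : Eucl n) (I : Set ℝ) :
    Set (Surface n (n - 1)) :=
  {S | ∃ r ∈ I, S.dom.Nonempty ∧ Set.InjOn S.toFun S.dom ∧
      S.toFun '' S.dom = sphere x₀ r ∩ D}

/-- The image of a family of surfaces under a map `f`. -/
def imageFam {n k : ℕ} (f : Eucl n → Eucl n) (Γ : Set (Surface n k)) :
    Set (Surface n k) :=
  {S' | ∃ S ∈ Γ, S'.dom = S.dom ∧ Set.EqOn S'.toFun (f ∘ S.toFun) S.dom}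

/-- The spherical ring `R(x₀,a,b)`. -/
def ringA {n : ℕ} (x₀ : Eucl n) (a b : ℝ) : Set (Eucl n) :=
  {x | a < dist x x₀ ∧ dist x x₀ < b}

/-- `‖Q‖_α(r) = (∫_{D ∩ S(x₀,r)} Q^α dA)^{1/α}`. -/
def sphNorm {n : ℕ} (D : Set (Eucl n)) (x₀ : Eucl n) (Q : Eucl n → ℝ≥0∞)
    (α : ℝ) (r : ℝ) : ℝ≥0∞ :=
  (∫⁻ x in D ∩ sphere x₀ r, Q x ^ α ∂(μH[((n : ℝ) - 1)] : Measure (Eucl n))) ^ (1 / α)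

/-- `f` is a lower `Q`-homeomorphism w.r.t. the `p`-modulus at `x₀`. -/
def IsLowerQHomeoAt {n : ℕ} (D : Set (Eucl n)) (f : Eucl n → Eucl n)
    (Q : Eucl n → ℝ≥0∞) (p : ℝ) (x₀ : Eucl n) (d₀ : ℝ≥0∞) : Prop :=
  ∀ ε ε₀ : ℝ, 0 < ε → ε < ε₀ → ENNReal.ofReal ε₀ < d₀ →
    (⨅ ρ ∈ extAdm p (n - 1) (sphereFam D x₀ (Ioo ε ε₀)),
        ∫⁻ x in ringA x₀ ε ε₀, ρ x ^ p / Q x) ≤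
      surfModulus p (n - 1) (imageFam f (sphereFam D x₀ (Ioo ε ε₀)))

/-- `f` is a homeomorphism of `D` onto `D'`. -/
structure IsHomeoOn {n : ℕ} (f : Eucl n → Eucl n) (D D' : Set (Eucl n)) : Prop where
  continuousOn : ContinuousOn f D
  injOn : Set.InjOn f D
  image_eq : f '' D = D'
  isOpenMapOn : ∀ U : Set (Eucl n), U ⊆ D → IsOpen U → IsOpen (f '' U)

/-- `Df` is the weak (Sobolev) derivative of `f` on `D`, and `f ∈ W^{1,1}_loc(D)`. -/
def IsWeakDerivOn {n m : ℕ} (D : Set (Eucl n)) (f : Eucl n → Eucl m)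
    (Df : Eucl n → Eucl n →L[ℝ] Eucl m) : Prop :=
  LocallyIntegrableOn f D volume ∧ LocallyIntegrableOn Df D volume ∧
  ∀ ψ : Eucl n → ℝ, ContDiff ℝ (⊤ : ℕ∞) ψ → HasCompactSupport ψ → tsupport ψ ⊆ D →
    ∀ v : Eucl n, ∫ x, ψ x • Df x v = - ∫ x, fderiv ℝ ψ x v • f x

/-- The Frobenius norm `|∇f| = (Σ_{i,j} (∂f_i/∂x_j)²)^{1/2}` of a linear map. -/
def frobNorm {n m : ℕ} (A : Eucl n →L[ℝ] Eucl m) : ℝ :=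
  Real.sqrt (∑ i : Fin m, ∑ j : Fin n, (A (EuclideanSpace.single j 1) i) ^ 2)

/-- The Orlicz–Sobolev class `W^{1,φ}_loc(D)` (with explicit weak derivative `Df`). -/
def MemOrliczSobolevOn {n m : ℕ} (φ : ℝ → ℝ) (D : Set (Eucl n))
    (f : Eucl n → Eucl m) (Df : Eucl n → Eucl n →L[ℝ] Eucl m) : Prop :=
  IsWeakDerivOn D f Df ∧
  ∀ K : Set (Eucl n), K ⊆ D → IsCompact K →
    (∫⁻ x in K, ENNReal.ofReal (φ (frobNorm (Df x)))) < ⊤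

/-- `φ` is nondecreasing and positive on `(0,∞)`. -/
def NondecPos (φ : ℝ → ℝ) : Prop :=
  (∀ s t : ℝ, 0 < s → s ≤ t → φ s ≤ φ t) ∧ ∀ t : ℝ, 0 < t → 0 < φ t

/-- The Calderón-type condition `∫_{t₀}^∞ (t/φ(t))^{1/(n-2)} dt < ∞`. -/
def CalderonCond (n : ℕ) (φ : ℝ → ℝ) : Prop :=
  ∃ t₀ : ℝ, 0 < t₀ ∧
    IntegrableOn (fun t => (t / φ t) ^ (1 / ((n : ℝ) - 2))) (Ioi t₀) volume

/-- `f` (with a.e. derivative `Df`) has finite distortion on `D`. -/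
def HasFiniteDistortionOn {n : ℕ} (D : Set (Eucl n))
    (Df : Eucl n → Eucl n →L[ℝ] Eucl n) : Prop :=
  ∃ K : Eucl n → ℝ, AEMeasurable K (volume.restrict D) ∧
    ∀ᵐ x ∂volume.restrict D, 1 ≤ K x ∧ ‖Df x‖ ^ n ≤ K x * (Df x).det

/-- The distortion `K_p(x,f)` for a map with derivative `Df`. -/
def distortionKp {n : ℕ} (p : ℝ) (Df : Eucl n → Eucl n →L[ℝ] Eucl n)
    (x : Eucl n) : ℝ≥0∞ :=
  if (Df x).det ≠ 0 then ENNReal.ofReal (‖Df x‖ ^ p / (Df x).det)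
  else if Df x = 0 then 1 else ⊤

/-- The multiplicity function of a curve `γ : [0,1] → ℝⁿ`. -/
def curveMult {n : ℕ} (γ : ℝ → Eucl n) (y : Eucl n) : ℝ≥0∞ :=
  (({t ∈ Icc (0:ℝ) 1 | γ t = y}).encard : ℕ∞)

/-- The line integral `∫_γ ρ ds = ∫ ρ(y) N(γ,y) dH¹(y)`. -/
def curveInt {n : ℕ} (γ : ℝ → Eucl n) (ρ : Eucl n → ℝ≥0∞) : ℝ≥0∞ :=
  ∫⁻ y, ρ y * curveMult γ y ∂(μH[(1 : ℝ)] : Measure (Eucl n))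

/-- The family of curves joining `A` and `B` in `G`. -/
def curveJoin {n : ℕ} (A B G : Set (Eucl n)) : Set (ℝ → Eucl n) :=
  {γ | ContinuousOn γ (Icc 0 1) ∧ γ 0 ∈ A ∧ γ 1 ∈ B ∧ Set.MapsTo γ (Icc 0 1) G}

/-- The `q`-modulus of a family of curves. -/
def curveModulus {n : ℕ} (q : ℝ) (Γ : Set (ℝ → Eucl n)) : ℝ≥0∞ :=
  ⨅ ρ ∈ {ρ : Eucl n → ℝ≥0∞ | Measurable ρ ∧ ∀ γ ∈ Γ, 1 ≤ curveInt γ ρ},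
    ∫⁻ x, ρ x ^ q

/-- The `q`-capacity of the condenser `(A,C)`, via the modulus of joining curves. -/
def condenserCap {n : ℕ} (q : ℝ) (A C : Set (Eucl n)) : ℝ≥0∞ :=
  curveModulus q (curveJoin (frontier A) (frontier C) (A \ C))

/-- `L(x₀,f) = limsup_{x→x₀} |f(x)-f(x₀)|/|x-x₀|`. -/
def LAt {n : ℕ} (f : Eucl n → Eucl n) (x₀ : Eucl n) : ℝ≥0∞ :=
  limsup (fun x => edist (f x) (f x₀) / edist x x₀) (𝓝[≠] x₀)

/-- `k_p(x₀) = limsup_{ε→0} (⨍_{B(x₀,ε)} K_p(x,f)^{(n-1)/(p-n+1)} dm)^{(p-n+1)/(n-1)}`. -/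
def kpAt {n : ℕ} (p : ℝ) (Df : Eucl n → Eucl n →L[ℝ] Eucl n) (x₀ : Eucl n) : ℝ≥0∞ :=
  limsup (fun ε : ℝ =>
      ((∫⁻ x in ball x₀ ε, distortionKp p Df x ^ (((n:ℝ)-1)/(p-(n:ℝ)+1))) /
        volume (ball x₀ ε)) ^ ((p-(n:ℝ)+1)/((n:ℝ)-1)))
    (𝓝[>] (0:ℝ))

/-- `f` is absolutely continuous on `S` w.r.t. `d`-dimensional Hausdorff measure. -/
def ACOnSet {n m : ℕ} (f : Eucl n → Eucl m) (S : Set (Eucl n)) (d : ℝ) : Prop :=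
  ∀ ε : ℝ, 0 < ε → ∃ δ : ℝ, 0 < δ ∧ ∀ A : Set (Eucl n), A ⊆ S →
    (μH[d] : Measure (Eucl n)) A < ENNReal.ofReal δ →
      (μH[d] : Measure (Eucl m)) (f '' A) < ENNReal.ofReal ε

/-- `f` is locally absolutely continuous on `S` w.r.t. `H^d`. -/
def LocACOnSet {n m : ℕ} (f : Eucl n → Eucl m) (S : Set (Eucl n)) (d : ℝ) : Prop :=
  ∀ x ∈ S, ∃ V ∈ 𝓝 x, ACOnSet f (S ∩ V) d

/-- The Luzin (N)-property of `f` on `S` w.r.t. `d`-dimensional Hausdorff measure. -/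
def LusinNOn {n m : ℕ} (f : Eucl n → Eucl m) (S : Set (Eucl n)) (d : ℝ) : Prop :=
  ∀ A : Set (Eucl n), A ⊆ S → (μH[d] : Measure (Eucl n)) A = 0 →
    (μH[d] : Measure (Eucl m)) (f '' A) = 0

end

/-- The radial profile `g(r)` of the example mapping. -/
noncomputable def gfun (n : ℕ) (p : ℝ) (r : ℝ) : ℝ :=
  (1 + (p - (n:ℝ)) * ∫ t in r..(1:ℝ),
      1 / (t ^ (p - (n:ℝ) + 1) *
        Real.log (Real.exp 1 / t) ^ ((p - (n:ℝ) + 1) / ((n:ℝ) - 1)))) ^ (-(1 / (p - (n:ℝ))))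

/-- The example radial homeomorphism `f(x) = (x/|x|) g(|x|)`, `f(0) = 0`. -/
noncomputable def fmap (n : ℕ) (p : ℝ) (x : Eucl n) : Eucl n :=
  if x = 0 then 0 else (gfun n p ‖x‖ / ‖x‖) • x

/-!
Put `a = p - n` and `G r = 1 + a * ∫ t in r..1, t ^ (-(a + 1)) * log (e / t) ^ (-b)`, so that
`g = G ^ (-1 / a)`. Without the logarithm, `G r` would equal `r ^ (-a)` and `f` would be the
identity. As `b > 0`, the logarithmic factor tends to `0` at the origin, so the integrand is
`o(t ^ (-(a + 1)))`; integrating gives `G r = o(r ^ (-a))`, which says that `g r / r → ∞`.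
-/

section RadialAsymptotics

open Asymptotics

theorem isLittleO_const_rpow_nhdsGT_zero {E : Type*} [NormedAddCommGroup E] (c : E) {s : ℝ}
    (hs : s < 0) : (fun _ ↦ c) =o[𝓝[>] 0] fun r : ℝ ↦ r ^ s :=
  isLittleO_const_left.mpr
    (.inr (tendsto_norm_atTop_atTop.comp (tendsto_rpow_neg_nhdsGT_zero hs)))

section IntervalIntegral

variable {E : Type*} [NormedAddCommGroup E] [NormedSpace ℝ E] {f : ℝ → E} {s : ℝ}

theorem norm_intervalIntegral_le_of_norm_le_mul_rpow {C r b : ℝ} (hs : s < -1) (hC : 0 ≤ C)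
    (hr : 0 < r) (hrb : r ≤ b) (hf : ∀ t ∈ Ioc r b, ‖f t‖ ≤ C * t ^ s) :
    ‖∫ t in r..b, f t‖ ≤ C / -(s + 1) * r ^ (s + 1) := by
  have hzero : (0 : ℝ) ∉ uIcc r b := notMem_uIcc_of_lt hr (hr.trans_le hrb)
  have hs' : 0 < -(s + 1) := by linarith
  calc ‖∫ t in r..b, f t‖
    _ ≤ ∫ t in r..b, C * t ^ s :=
      intervalIntegral.norm_integral_le_of_norm_le hrb (ae_of_all _ hf)
        ((intervalIntegral.intervalIntegrable_rpow (.inr hzero)).const_mul C)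
    _ = C / -(s + 1) * (r ^ (s + 1) - b ^ (s + 1)) := by
      rw [intervalIntegral.integral_const_mul, integral_rpow (.inr ⟨hs.ne, hzero⟩), div_neg,
        ← neg_sub (r ^ (s + 1)), neg_div, mul_neg, neg_mul, mul_div_assoc', div_mul_eq_mul_div]
    _ ≤ C / -(s + 1) * r ^ (s + 1) := by
      gcongr
      exact sub_le_self _ (Real.rpow_nonneg (hr.le.trans hrb) _)

theorem isLittleO_intervalIntegral_rpow_add_one {b : ℝ} (hs : s < -1) (hb : 0 < b)
    (hint : ∀ r ∈ Ioo 0 b, IntervalIntegrable f volume r b)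
    (hf : f =o[𝓝[>] 0] fun t ↦ t ^ s) :
    (fun r ↦ ∫ t in r..b, f t) =o[𝓝[>] 0] fun r ↦ r ^ (s + 1) := by
  refine isLittleO_iff.mpr fun c hc ↦ ?_
  have hs' : 0 < -(s + 1) := by linarith
  have hc' : 0 < c / 2 * -(s + 1) := by positivity
  obtain ⟨δ, hδ, hsub⟩ := mem_nhdsGT_iff_exists_Ioc_subset.mp
    (inter_mem (Ioo_mem_nhdsGT hb) (isLittleO_iff.mp hf hc'))
  have hδb : δ ∈ Ioo 0 b := (hsub ⟨hδ, le_rfl⟩).1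
  have htail := isLittleO_iff.mp
    (isLittleO_const_rpow_nhdsGT_zero (∫ t in δ..b, f t) (neg_pos.mp hs')) (half_pos hc)
  filter_upwards [Ioc_mem_nhdsGT hδ, htail] with r hr htail_r
  have hrpow : ‖r ^ (s + 1)‖ = r ^ (s + 1) := Real.norm_of_nonneg (Real.rpow_nonneg hr.1.le _)
  rw [hrpow] at htail_r ⊢
  have hhead : ‖∫ t in r..δ, f t‖ ≤ c / 2 * r ^ (s + 1) := by
    have hbound : ∀ t ∈ Ioc r δ, ‖f t‖ ≤ c / 2 * -(s + 1) * t ^ s := fun t ht ↦ by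
      have ht0 : 0 < t := hr.1.trans ht.1
      have hft : ‖f t‖ ≤ c / 2 * -(s + 1) * ‖t ^ s‖ := (hsub ⟨ht0, ht.2⟩).2
      rwa [Real.norm_of_nonneg (Real.rpow_nonneg ht0.le s)] at hft
    simpa only [mul_div_cancel_right₀ _ hs'.ne'] using
      norm_intervalIntegral_le_of_norm_le_mul_rpow hs hc'.le hr.1 hr.2 hbound
  have hint_r := hint r ⟨hr.1, hr.2.trans_lt hδb.2⟩
  have hint_δ := hint δ hδb
  calc ‖∫ t in r..b, f t‖
    _ = ‖(∫ t in r..δ, f t) + ∫ t in δ..b, f t‖ := by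
      rw [intervalIntegral.integral_add_adjacent_intervals (hint_r.trans hint_δ.symm) hint_δ]
    _ ≤ c / 2 * r ^ (s + 1) + c / 2 * r ^ (s + 1) := norm_add_le_of_le hhead htail_r
    _ = c * r ^ (s + 1) := by ring

end IntervalIntegral

theorem tendsto_log_exp_one_div_nhdsGT_zero :
    Tendsto (fun t ↦ Real.log (Real.exp 1 / t)) (𝓝[>] 0) atTop :=
  Real.tendsto_log_atTop.comp
    (tendsto_inv_nhdsGT_zero.const_mul_atTop (Real.exp_pos 1))

theorem log_exp_one_div_pos {t : ℝ} (ht : t ∈ Ioo 0 (Real.exp 1)) :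
    0 < Real.log (Real.exp 1 / t) :=
  Real.log_pos ((one_lt_div ht.1).mpr ht.2)

theorem isLittleO_one_div_rpow_mul_log_rpow (a : ℝ) {b : ℝ} (hb : 0 < b) :
    (fun t ↦ 1 / (t ^ a * Real.log (Real.exp 1 / t) ^ b)) =o[𝓝[>] 0] fun t ↦ t ^ (-a) := by
  have hlog : (fun t ↦ Real.log (Real.exp 1 / t) ^ (-b)) =o[𝓝[>] 0] fun _ ↦ (1 : ℝ) :=
    (isLittleO_one_iff ℝ).mpr
      ((tendsto_rpow_neg_atTop hb).comp tendsto_log_exp_one_div_nhdsGT_zero)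
  refine ((isBigO_refl (fun t : ℝ ↦ t ^ (-a)) _).mul_isLittleO hlog).congr' ?_ (by simp)
  filter_upwards [Ioo_mem_nhdsGT (Real.exp_pos 1)] with t ht
  rw [Real.rpow_neg ht.1.le, Real.rpow_neg (log_exp_one_div_pos ht).le, one_div, mul_inv]

theorem intervalIntegrable_one_div_rpow_mul_log_rpow (a b : ℝ) {u v : ℝ}
    (hu : u ∈ Ioo 0 (Real.exp 1)) (hv : v ∈ Ioo 0 (Real.exp 1)) :
    IntervalIntegrable (fun t ↦ 1 / (t ^ a * Real.log (Real.exp 1 / t) ^ b)) volume u v := by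
  refine ContinuousOn.intervalIntegrable fun t ht ↦ ContinuousAt.continuousWithinAt ?_
  have ht' : t ∈ Ioo 0 (Real.exp 1) := ordConnected_Ioo.uIcc_subset hu hv ht
  have ht0 : 0 < t := ht'.1
  have hlog := log_exp_one_div_pos ht'
  have hdiv : Real.exp 1 / t ≠ 0 := (div_pos (Real.exp_pos 1) ht0).ne'
  have hcont : ContinuousAt (fun t ↦ Real.log (Real.exp 1 / t)) t :=
    (continuousAt_const.div continuousAt_id ht0.ne').log hdiv
  exact continuousAt_const.div ((Real.continuousAt_rpow_const _ _ (.inl ht0.ne')).mul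
    (hcont.rpow_const (.inl hlog.ne'))) (by positivity)

theorem integral_one_div_rpow_mul_log_rpow_nonneg (a b : ℝ) {u v : ℝ} (hu : 0 < u)
    (huv : u ≤ v) (hv : v < Real.exp 1) :
    0 ≤ ∫ t in u..v, 1 / (t ^ a * Real.log (Real.exp 1 / t) ^ b) := by
  refine intervalIntegral.integral_nonneg huv fun t ht ↦ ?_
  have ht0 : 0 < t := hu.trans_le ht.1
  have hlog := log_exp_one_div_pos ⟨ht0, ht.2.trans_lt hv⟩
  positivity

theorem tendsto_rpow_neg_one_div_div_atTop {G : ℝ → ℝ} {a : ℝ} (ha : 0 < a)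
    (hG_pos : ∀ᶠ r in 𝓝[>] 0, 0 < G r) (hG : G =o[𝓝[>] 0] fun r ↦ r ^ (-a)) :
    Tendsto (fun r ↦ G r ^ (-(1 / a)) / r) (𝓝[>] 0) atTop := by
  have hroot : (fun r ↦ G r ^ (1 / a)) =o[𝓝[>] 0] fun r ↦ r⁻¹ := by
    refine (hG.rpow (one_div_pos.mpr ha) ?_).congr' .rfl ?_
    · filter_upwards [self_mem_nhdsWithin] with r hr using Real.rpow_nonneg (le_of_lt hr) _
    · filter_upwards [self_mem_nhdsWithin] with r hr
      rw [← Real.rpow_mul (le_of_lt hr), neg_mul, mul_one_div_cancel ha.ne', Real.rpow_neg_one]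
  have hquot : Tendsto (fun r ↦ G r ^ (1 / a) / r⁻¹) (𝓝[>] 0) (𝓝[>] 0) := by
    refine tendsto_nhdsWithin_iff.mpr ⟨hroot.tendsto_div_nhds_zero, ?_⟩
    filter_upwards [self_mem_nhdsWithin, hG_pos] with r (hr : 0 < r) hGr
    exact mem_Ioi.mpr (by positivity)
  refine hquot.inv_tendsto_nhdsGT_zero.congr' ?_
  filter_upwards [hG_pos] with r hGr
  rw [Pi.inv_apply, inv_div, Real.rpow_neg hGr.le, inv_div_comm]

theorem tendsto_gfun_div_atTop {n : ℕ} (hn : 2 ≤ n) {p : ℝ} (hp : (n : ℝ) < p) :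
    Tendsto (fun r ↦ gfun n p r / r) (𝓝[>] 0) atTop := by
  have hn' : (2 : ℝ) ≤ n := by exact_mod_cast hn
  have ha : 0 < p - n := sub_pos.mpr hp
  have hb : 0 < (p - n + 1) / ((n : ℝ) - 1) := div_pos (by linarith) (by linarith)
  have hexp : 1 < Real.exp 1 := Real.one_lt_exp_iff.mpr one_pos
  refine tendsto_rpow_neg_one_div_div_atTop ha ?_ (.add ?_ (.const_mul_left ?_ _))
  · filter_upwards [Ioc_mem_nhdsGT one_pos] with r hr
    have hI := integral_one_div_rpow_mul_log_rpow_nonneg (p - n + 1)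
      ((p - n + 1) / ((n : ℝ) - 1)) hr.1 hr.2 hexp
    positivity
  · exact isLittleO_const_rpow_nhdsGT_zero _ (neg_lt_zero.mpr ha)
  · have hI := isLittleO_intervalIntegral_rpow_add_one (by linarith) one_pos
      (fun r hr ↦ intervalIntegrable_one_div_rpow_mul_log_rpow _ _
        ⟨hr.1, hr.2.trans hexp⟩ ⟨one_pos, hexp⟩)
      (isLittleO_one_div_rpow_mul_log_rpow (p - n + 1) hb)
    rwa [neg_add, neg_add_cancel_right] at hI

end RadialAsymptotics

theorem edist_smul_self_zero_div_edist_zero {𝕜 E : Type*} [NormedField 𝕜]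
    [NormedAddCommGroup E] [NormedSpace 𝕜 E] (c : 𝕜) {x : E} (hx : x ≠ 0) :
    edist (c • x) 0 / edist x 0 = ‖c‖ₑ := by
  rw [edist_zero_right, edist_zero_right, enorm_smul,
    ENNReal.mul_div_cancel_right (enorm_ne_zero.mpr hx) enorm_ne_top]

theorem LAt_smul_self_zero_eq_top {n : ℕ} [NeZero n] {k : Eucl n → ℝ}
    (hk : Tendsto (fun x ↦ ‖k x‖) (𝓝[≠] 0) atTop) : LAt (fun x ↦ k x • x) 0 = ⊤ := by
  refine ((ENNReal.tendsto_ofReal_atTop.comp hk).congr' ?_).limsup_eq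
  filter_upwards [self_mem_nhdsWithin] with x hx
  rw [Function.comp_apply, ofReal_norm, smul_zero, edist_smul_self_zero_div_edist_zero _ hx]

theorem fmap_eq_smul_self (n : ℕ) (p : ℝ) : fmap n p = fun x ↦ (gfun n p ‖x‖ / ‖x‖) • x := by
  ext1 x
  by_cases hx : x = 0 <;> simp [fmap, hx]

theorem stmt_16_general (n : ℕ) (hn : 2 ≤ n) (p : ℝ) (hp : (n : ℝ) < p) :
    Tendsto (fun r : ℝ => gfun n p r / r) (𝓝[>] (0:ℝ)) atTop ∧ LAt (fmap n p) 0 = ⊤ := by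
  have : NeZero n := ⟨by omega⟩
  have hg := tendsto_gfun_div_atTop hn hp
  refine ⟨hg, ?_⟩
  rw [fmap_eq_smul_self]
  exact LAt_smul_self_zero_eq_top
    (tendsto_norm_atTop_atTop.comp (hg.comp tendsto_norm_nhdsNE_zero))

/-- `g(r)/r → ∞` as `r → 0+`, so the example radial homeomorphism satisfies
`limsup_{x→0} |f(x)-f(0)|/|x| = ∞`, i.e. it is not (finitely) Lipschitz at the origin. -/
theorem stmt_16 (n : ℕ) (hn : 3 ≤ n) (p : ℝ)
    (hp : p ∈ Ioo (n : ℝ) ((n : ℝ) + 1 / ((n : ℝ) - 2))) :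
    Tendsto (fun r : ℝ => gfun n p r / r) (𝓝[>] (0:ℝ)) atTop ∧
    LAt (fmap n p) 0 = ⊤ :=
  stmt_16_general n (by omega) p hp.1
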